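/- Let N be a finite nonabelian 2-group with N/N' ≅ C₂ × C₂ whose automorphism group is not a 2-group. Then N ≅ Q₈. -/

import Mathlib

/-!
The classification of 2-groups of maximal class is not needed. Write `γ₂ = N'`, `γ₃ = [γ₂, N]`,
`γ₄ = [γ₃, N]`.

Since `Aut N` is not a 2-group, it has an element `σ` of odd prime order `p`. It cannot act
trivially on `N / N'`: otherwise it would permute each coset of `N'`, a set of 2-power size, and so
fix a point in each of them; these fixed points generate `N` modulo `N' ≤ Φ(N)`, so `σ = 1`
(`exists_moved`). Having odd order, `σ` then permutes the three involutions of `N / N' ≅ C₂ × C₂`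
cyclically: there is `a` such that `N / N'` is generated by the classes of `a` and `b = σ a`, and
`σ b ≡ a b` (`exists_frame`).

In a quotient where `γ₂` is central, `γ₂` is generated by `c = [a, b]` and `c² = [a², b] = 1`, so
`σ` fixes `γ₂` pointwise. As all squares lie in `γ₂`, this gives `a² = b² = (ab)²`, and
`(ab)² = c a² b²` forces `a² = b² = c` (`class_two_relations`).

Apply this to `N / γ₃`: modulo `γ₄`, where `γ₃` becomes central, `c` equals both `a²` and `b²` up to
a central factor, so it commutes with `a` and `b`, and `γ₂` is central
(`commutator_le_center_of_gen`). Hence `γ₃ ≤ γ₄`, and `γ₃ = 1` because `N` is nilpotent. The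
relations therefore hold in `N` itself; they are those of `Q₈`, and `|N| = 4 · 2 = 8`.
-/

open scoped commutatorElement

/-! ### Nilpotent groups and 2-groups -/

theorem eq_bot_of_le_commutator {G : Type*} [Group G] [Group.IsNilpotent G] {H : Subgroup G}
    (h : H ≤ ⁅H, (⊤ : Subgroup G)⁆) : H = ⊥ := by
  obtain ⟨n, hn⟩ := Subgroup.nilpotent_iff_lowerCentralSeries.1 (inferInstance : Group.IsNilpotent G)
  have key : ∀ m : ℕ, H ≤ (⊤ : Subgroup G).lowerCentralSeries m := by
    intro m
    induction m with
    | zero => simp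
    | succ k ih => exact h.trans (Subgroup.commutator_mono ih le_rfl)
  exact le_bot_iff.1 (hn ▸ key n)

/-- The derived subgroup of a finite 2-group consists of non-generators: a maximal subgroup `M` is
normal, and the nontrivial centre of `G ⧸ M` must be all of it, so `M` contains `G'`. -/
theorem eq_top_of_sup_commutator {G : Type*} [Group G] [Finite G] (h2 : IsPGroup 2 G)
    {H : Subgroup G} (h : H ⊔ commutator G = ⊤) : H = ⊤ := by
  have := h2.isNilpotent
  rcases eq_top_or_exists_le_coatom H with h1 | ⟨M, hM, hHM⟩
  · exact h1
  exfalso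
  have hn : M.Normal := Subgroup.NormalizerCondition.normal_of_coatom M
    Group.normalizerCondition_of_isNilpotent hM
  have hnt : Nontrivial (G ⧸ M) := QuotientGroup.nontrivial_iff.2 hM.1
  have := (h2.to_quotient M).center_nontrivial
  obtain ⟨z, hz, hz1⟩ := (Subgroup.nontrivial_iff_exists_ne_one _).1 this
  obtain ⟨x, rfl⟩ := QuotientGroup.mk_surjective z
  have hlt : M < (Subgroup.center (G ⧸ M)).comap (QuotientGroup.mk' M) := by
    refine lt_of_le_of_ne (fun m hm => ?_) (fun he => ?_)
    · rw [Subgroup.mem_comap, QuotientGroup.mk'_apply, (QuotientGroup.eq_one_iff m).2 hm]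
      exact one_mem _
    · exact hz1 ((QuotientGroup.eq_one_iff x).2 (he ▸ hz))
  have htop := hM.2 _ hlt
  have hc : commutator G ≤ M := by
    rw [commutator_def, Subgroup.commutator_le]
    intro x _ y _
    rw [← QuotientGroup.eq_one_iff]
    change QuotientGroup.mk' M ⁅x, y⁆ = 1
    rw [map_commutatorElement, commutatorElement_eq_one_iff_mul_comm]
    have hx : x ∈ (Subgroup.center (G ⧸ M)).comap (QuotientGroup.mk' M) := htop ▸ trivial
    exact (Subgroup.mem_center_iff.1 hx _).symm
  exact hM.1 (top_le_iff.1 (h ▸ sup_le hHM hc))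

/-- Burnside: an automorphism of odd prime order of a finite 2-group acts nontrivially on the
abelianization. -/
theorem exists_moved {N : Type*} [Group N] [Finite N] (h2 : IsPGroup 2 N) {p : ℕ}
    [Fact p.Prime] (hp : p ≠ 2) {σ : MulAut N} (hσ : orderOf σ = p) :
    ∃ a : N, a⁻¹ * σ a ∉ commutator N := by
  classical
  by_contra! hcon
  have hfix : ∀ a : N, ∃ x : N, a⁻¹ * x ∈ commutator N ∧ σ x = x := by
    intro a
    have hP : ∀ x, a⁻¹ * σ.toEquiv x ∈ commutator N ↔ a⁻¹ * x ∈ commutator N := by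
      intro x
      have : a⁻¹ * σ.toEquiv x = (a⁻¹ * x) * (x⁻¹ * σ x) := by simp [mul_assoc]
      rw [this, Subgroup.mul_mem_cancel_right _ (hcon x)]
    let f : Equiv.Perm {x : N // a⁻¹ * x ∈ commutator N} := Equiv.Perm.subtypePerm σ.toEquiv hP
    have hf : f ^ p ^ 1 = 1 := by
      have h1 : (σ.toEquiv : Equiv.Perm N) ^ p = 1 := by
        have : σ ^ p = 1 := hσ ▸ pow_orderOf_eq_one σ
        exact (map_pow (MulAut.toPerm N) σ p).symm.trans
          ((congrArg (MulAut.toPerm N) this).trans (map_one _))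
      ext x
      rw [pow_one, Equiv.Perm.subtypePerm_pow]
      exact congrArg (fun g : Equiv.Perm N => g x.1) h1
    have : Fintype {x : N // a⁻¹ * x ∈ commutator N} := Fintype.ofFinite _
    have hcard : ¬ p ∣ Fintype.card {x : N // a⁻¹ * x ∈ commutator N} := by
      have e : {x : N // a⁻¹ * x ∈ commutator N} ≃ commutator N :=
        Equiv.subtypeEquiv (Equiv.mulLeft a⁻¹) (fun x => Iff.rfl)
      obtain ⟨n, hn⟩ := IsPGroup.iff_card.1 (h2.to_subgroup (commutator N))
      rw [← Nat.card_eq_fintype_card, Nat.card_congr e, hn]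
      intro hd
      exact hp ((Nat.prime_dvd_prime_iff_eq (Fact.out : p.Prime) Nat.prime_two).1
        ((Fact.out : p.Prime).dvd_of_dvd_pow hd))
    obtain ⟨x, hx⟩ := Equiv.Perm.exists_fixed_point_of_prime hcard hf
    exact ⟨x.1, x.2, congrArg Subtype.val hx⟩
  have htop : MonoidHom.eqLocus (σ : N →* N) (MonoidHom.id N) = ⊤ := by
    apply eq_top_of_sup_commutator h2
    rw [eq_top_iff]
    intro a _
    obtain ⟨x, hx, hs⟩ := hfix a
    have : a = x * (a⁻¹ * x)⁻¹ := by group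
    rw [this]
    exact Subgroup.mul_mem_sup (show (σ : N →* N) x = x from hs) (inv_mem hx)
  have : σ = 1 := by
    ext x
    have hx : x ∈ MonoidHom.eqLocus (σ : N →* N) (MonoidHom.id N) := htop ▸ trivial
    exact hx
  rw [this, orderOf_one] at hσ
  exact (Fact.out : p.Prime).one_lt.ne hσ

/-! ### Relations between the generators -/

/-- Here `T` stands for the derived subgroup, `Z` for the next term of the lower central series, and
`c` for `[a, b]`. Being a square of `a` and of `b` up to a central factor, `c` commutes with both
generators, so `T` is central. -/
theorem commutator_le_center_of_gen {G : Type*} [Group G] {T Z : Subgroup G} {a b : G}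
    (hZ : Z ≤ Subgroup.center G)
    (hcov : ∀ x : G, ∃ t ∈ T, x = t ∨ x = a * t ∨ x = b * t ∨ x = a * b * t)
    (c : G) (ha : ∃ g ∈ Z, a * a = c * g) (hb : ∃ g ∈ Z, b * b = c * g)
    (hT : ∀ t ∈ T, ∃ g ∈ Z, t = g ∨ t = c * g) : T ≤ Subgroup.center G := by
  have hz : ∀ g ∈ Z, ∀ x, Commute x g := fun g hg x => Subgroup.mem_center_iff.1 (hZ hg) x
  have hac : Commute a c := by
    obtain ⟨g, hg, h⟩ := ha
    rw [eq_mul_inv_of_mul_eq h.symm]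
    exact ((Commute.refl a).mul_right (Commute.refl a)).mul_right (hz g hg a).inv_right
  have hbc : Commute b c := by
    obtain ⟨g, hg, h⟩ := hb
    rw [eq_mul_inv_of_mul_eq h.symm]
    exact ((Commute.refl b).mul_right (Commute.refl b)).mul_right (hz g hg b).inv_right
  have htc : ∀ t ∈ T, Commute t c := by
    intro t ht
    obtain ⟨g, hg, rfl | rfl⟩ := hT t ht
    · exact (hz _ hg c).symm
    · exact (Commute.refl c).mul_left (hz _ hg c).symm
  have hc : ∀ x, Commute x c := by
    intro x
    obtain ⟨t, ht, rfl | rfl | rfl | rfl⟩ := hcov x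
    · exact htc _ ht
    · exact hac.mul_left (htc _ ht)
    · exact hbc.mul_left (htc _ ht)
    · exact (hac.mul_left hbc).mul_left (htc _ ht)
  intro t ht
  rw [Subgroup.mem_center_iff]
  intro x
  obtain ⟨g, hg, rfl | rfl⟩ := hT t ht
  · exact hz _ hg x
  · exact (hc x).mul_right (hz _ hg x)

/-- In a group of class at most 2 with `G / G'` of exponent 2 generated by `a, b`, and with an
endomorphism acting as `a ↦ b ↦ ab` modulo `G'`, the relations of `Q₈` hold. -/
theorem class_two_relations {G : Type*} [Group G] (σ : G →* G) {a b t : G}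
    (hσa : σ a = b) (ht : t ∈ commutator G) (hσb : σ b = a * b * t)
    (hc : commutator G ≤ Subgroup.center G)
    (hcov : ∀ x : G, ∃ t ∈ commutator G, x = t ∨ x = a * t ∨ x = b * t ∨ x = a * b * t)
    (hsq : ∀ x : G, x * x ∈ commutator G) :
    a * a = ⁅a, b⁆ ∧ b * b = ⁅a, b⁆ ∧ ⁅a, b⁆ * ⁅a, b⁆ = 1 ∧
      ∀ x ∈ commutator G, x = 1 ∨ x = ⁅a, b⁆ := by
  have hz : ∀ g ∈ commutator G, ∀ x, x * g = g * x :=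
    fun g hg x => Subgroup.mem_center_iff.1 (hc hg) x
  have hcm : ⁅a, b⁆ ∈ commutator G :=
    Subgroup.commutator_mem_commutator (Subgroup.mem_top a) (Subgroup.mem_top b)
  have hswap : a * b = ⁅a, b⁆ * (b * a) := by simp [commutatorElement_def, mul_assoc]
  generalize hcdef : ⁅a, b⁆ = c at *
  -- `c ^ 2 = [a ^ 2, b] = 1`
  have hcc : c * c = 1 := by
    have h1 : a * a * b = c * c * (b * (a * a)) := by
      calc a * a * b = a * (a * b) := mul_assoc _ _ _
        _ = a * c * b * a := by rw [hswap]; simp only [mul_assoc]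
        _ = c * (a * b) * a := by rw [hz c hcm a]; simp only [mul_assoc]
        _ = c * c * (b * (a * a)) := by rw [hswap]; simp only [mul_assoc]
    rw [hz _ (hsq a) b] at h1
    exact (mul_eq_right.1 h1.symm)
  have hzp : ∀ x ∈ Subgroup.zpowers c, x = 1 ∨ x = c := by
    rintro x ⟨n, rfl⟩
    have h2 : c ^ (2 : ℤ) = 1 := by rw [zpow_two, hcc]
    rcases Int.even_or_odd' n with ⟨k, rfl | rfl⟩
    · left; simp [zpow_mul, h2]
    · right; simp [zpow_add, zpow_mul, h2]
  have hnorm : (Subgroup.zpowers c).Normal := by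
    refine ⟨fun x hx g => ?_⟩
    have hx' : x ∈ commutator G := (Subgroup.zpowers_le.2 hcm) hx
    rw [hz x hx' g, mul_inv_cancel_right]
    exact hx
  -- modulo `c` the generators commute, so the quotient by `⟨c⟩` is abelian
  have hle : commutator G ≤ Subgroup.zpowers c := by
    let π := QuotientGroup.mk' (Subgroup.zpowers c)
    have hπc : π c = 1 := (QuotientGroup.eq_one_iff c).2 (Subgroup.mem_zpowers c)
    have hab : Commute (π a) (π b) := by
      change π a * π b = π b * π a
      rw [← map_mul, hswap, map_mul, hπc, one_mul, map_mul]
    have hcent : ∀ g ∈ commutator G, ∀ x, Commute (π x) (π g) := by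
      intro g hg x
      change π x * π g = π g * π x
      rw [← map_mul, hz g hg x, map_mul]
    have hgen : ∀ y : G ⧸ Subgroup.zpowers c, Commute y (π a) → Commute y (π b) →
        (∀ g ∈ commutator G, Commute y (π g)) → ∀ x, Commute y (π x) := by
      intro y h1 h2 h3 x
      obtain ⟨t, ht, rfl | rfl | rfl | rfl⟩ := hcov x
      · exact h3 _ ht
      · rw [map_mul]; exact h1.mul_right (h3 _ ht)
      · rw [map_mul]; exact h2.mul_right (h3 _ ht)
      · rw [map_mul, map_mul]; exact (h1.mul_right h2).mul_right (h3 _ ht)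
    have ha := hgen (π a) (Commute.refl _) hab (fun g hg => hcent g hg a)
    have hb := hgen (π b) hab.symm (Commute.refl _) (fun g hg => hcent g hg b)
    rw [commutator_def, Subgroup.commutator_le]
    intro x _ y _
    rw [← QuotientGroup.eq_one_iff]
    change π ⁅x, y⁆ = 1
    rw [map_commutatorElement, commutatorElement_eq_one_iff_mul_comm]
    exact hgen (π x) (ha x).symm (hb x).symm (fun g hg => hcent g hg x) y
  have hT : ∀ x ∈ commutator G, x = 1 ∨ x = c := fun x hx => hzp x (hle hx)
  have hT2 : ∀ x ∈ commutator G, x * x = 1 := by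
    intro x hx
    rcases hT x hx with rfl | rfl
    · simp
    · exact hcc
  -- modulo central elements, `σ c = [b, ab] = [b, a] = c⁻¹ = c`
  have hσc : σ c = c := by
    have h1 := congrArg σ hswap
    simp only [map_mul, hσa, hσb] at h1
    have h2 : b * (a * b * t) = c * (a * b * t * b) := by
      have : a * b * t * b = c * (b * (a * b * t)) := by
        calc a * b * t * b = a * b * (b * t) := by rw [mul_assoc (a * b), hz t ht b]
          _ = c * (b * a) * (b * t) := congrArg (· * (b * t)) hswap
          _ = c * (b * (a * b * t)) := by simp only [mul_assoc]
      rw [this, ← mul_assoc c c, hcc, one_mul]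
    rw [h2] at h1
    exact (mul_right_cancel h1).symm
  have hσT : ∀ x ∈ commutator G, σ x = x := by
    intro x hx
    rcases hT x hx with rfl | rfl
    · simp
    · exact hσc
  have hb2 : b * b = a * a := by
    rw [← hσT _ (hsq a), map_mul, hσa]
  have hab2 : a * b * (a * b) = b * b := by
    have h := hσT _ (hsq b)
    rw [map_mul, hσb] at h
    rw [← h]
    calc a * b * (a * b) = a * b * (a * b) * (t * t) := by rw [hT2 t ht, mul_one]
      _ = a * b * (a * b * t) * t := by simp only [mul_assoc]
      _ = a * b * t * (a * b * t) := by
        rw [mul_assoc (a * b) t, ← hz t ht (a * b * t)]; simp only [mul_assoc]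
  have hac : a * a = c := by
    have h1 : a * b * (a * b) = c * ((a * a) * (b * b)) := by
      have hba : b * a = c * (a * b) := by rw [hswap, ← mul_assoc, hcc, one_mul]
      calc a * b * (a * b) = a * (b * a) * b := by simp only [mul_assoc]
        _ = a * c * (a * b) * b := by rw [hba]; simp only [mul_assoc]
        _ = c * ((a * a) * (b * b)) := by rw [hz c hcm a]; simp only [mul_assoc]
    rw [hab2, ← hb2, hT2 _ (hsq b), mul_one] at h1
    rw [← hb2, h1]
  exact ⟨hac, hb2.trans hac, hcc, hT⟩

/-! ### Recognition of `Q₈` -/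

/-- A group of order 8 satisfying the defining relations of `Q₈`, every element of which has the
normal form `x ^ i` or `y * x ^ i`, is `Q₈`. -/
theorem nonempty_equiv_of_relations {N : Type*} [Group N] (hcard : Nat.card N = 8) {x y : N}
    (hx : x ^ 4 = 1) (hy : y * y = x * x) (hxy : x * y = y * x⁻¹)
    (hcov : ∀ g : N, ∃ i : ℤ, g = x ^ i ∨ g = y * x ^ i) :
    Nonempty (N ≃* QuaternionGroup 2) := by
  let f : ZMod (2 * 2) →+ Additive N :=
    ZMod.lift (2 * 2) ⟨zmultiplesHom (Additive N) (Additive.ofMul x), by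
      change Additive.ofMul (x ^ (4 : ℤ)) = 0
      rw [show (4 : ℤ) = (4 : ℕ) from rfl, zpow_natCast, hx, ofMul_one]⟩
  let e : ZMod (2 * 2) → N := fun i => (f i).toMul
  have he : ∀ i j, e (i + j) = e i * e j := fun i j => by simp [e]
  have hei : ∀ i : ℤ, e (i : ZMod (2 * 2)) = x ^ i := fun i => by
    simp [e, f]
  have hmv : ∀ i, e i * y = y * e (-i) := by
    intro i
    obtain ⟨k, rfl⟩ := ZMod.intCast_surjective i
    rw [← Int.cast_neg, hei, hei, zpow_neg, ← inv_zpow]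
    have : SemiconjBy y x⁻¹ x := hxy.symm
    exact (this.zpow_right k).symm
  have he2 : e 2 = y * y := by
    have := hei 2
    rw [hy, ← zpow_two, ← this]; rfl
  let F : QuaternionGroup 2 → N
    | .a i => e i
    | .xa i => y * e i
  have hF : ∀ p q, F (p * q) = F p * F q := by
    rintro (i | i) (j | j)
    · simp [F, he]
    · simp only [F, QuaternionGroup.a_mul_xa]
      rw [← mul_assoc, hmv, mul_assoc, ← he]; congr 2; ring
    · simp only [F, QuaternionGroup.xa_mul_a, he, mul_assoc]
    · simp only [F, QuaternionGroup.xa_mul_xa]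
      rw [← mul_assoc (y * e i), mul_assoc y (e i), hmv, ← mul_assoc, mul_assoc (y * y), ← he,
        ← he2, ← he]
      congr 1
      push_cast
      ring
  have hsurj : Function.Surjective F := by
    intro g
    obtain ⟨i, h | h⟩ := hcov g
    · exact ⟨.a (i : ZMod (2 * 2)), by simp only [F]; rw [hei, h]⟩
    · exact ⟨.xa (i : ZMod (2 * 2)), by simp only [F]; rw [hei, h]⟩
  have hbij : Function.Bijective F := by
    have : Finite N := Nat.finite_of_card_ne_zero (by omega)
    refine (Nat.bijective_iff_surjective_and_card F).2 ⟨hsurj, ?_⟩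
    rw [hcard, Nat.card_eq_fintype_card, QuaternionGroup.card]
  exact ⟨(MulEquiv.ofBijective (MonoidHom.mk' F hF) hbij).symm⟩

/-! ### The action on the abelianization -/

theorem klein_cover : ∀ u v : ZMod 2 × ZMod 2, u ≠ 0 → v ≠ 0 → u ≠ v →
    ∀ x, x = 0 ∨ x = u ∨ x = v ∨ x = u + v := by decide

theorem klein_sq : ∀ u : ZMod 2 × ZMod 2, u + u = 0 := by decide

/-- An automorphism of odd order that moves the class of `a` in `N / N' ≅ C₂ × C₂` acts there by the
3-cycle `a ↦ σ a ↦ a * σ a`, and `a`, `σ a` generate `N` modulo `N'`. -/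
theorem exists_frame {N : Type*} [Group N]
    (hab : Nonempty (Abelianization N ≃* Multiplicative (ZMod 2 × ZMod 2)))
    {p : ℕ} (hp : Odd p) {σ : MulAut N} (hσ : σ ^ p = 1) {a : N}
    (ha : a⁻¹ * σ a ∉ commutator N) :
    (∃ t ∈ commutator N, σ (σ a) = a * σ a * t) ∧
    (∀ x : N, ∃ t ∈ commutator N, x = t ∨ x = a * t ∨ x = σ a * t ∨ x = a * σ a * t) ∧
    (∀ x : N, x * x ∈ commutator N) := by
  obtain ⟨e⟩ := hab
  let q : N → ZMod 2 × ZMod 2 := fun x => (e (Abelianization.of x)).toAdd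
  have hq : ∀ x y, q (x * y) = q x + q y := fun x y => by simp [q]
  have hq1 : ∀ x, q x = 0 ↔ x ∈ commutator N := by
    intro x
    rw [← Abelianization.ker_of, MonoidHom.mem_ker]
    simp [q]
  have hqi : ∀ x, q x⁻¹ = - q x := fun x => by simp [q]
  have hqe : ∀ x y, q x = q y ↔ y⁻¹ * x ∈ commutator N := by
    intro x y
    rw [← hq1, hq, hqi, neg_add_eq_zero, eq_comm]
  have hchar : ∀ τ : MulAut N, ∀ x, x ∈ commutator N → τ x ∈ commutator N := by
    intro τ x hx
    have : x ∈ (commutator N).comap (τ : N ≃* N).toMonoidHom :=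
      ((inferInstance : (commutator N).Characteristic).fixed τ).symm ▸ hx
    exact this
  have hsig : ∀ τ : MulAut N, ∀ x y, q x = q y → q (τ x) = q (τ y) := by
    intro τ x y h
    rw [hqe] at h ⊢
    simpa using hchar τ _ h
  have hinj : ∀ x y, q (σ x) = q (σ y) → q x = q y := by
    intro x y h
    simpa using hsig σ⁻¹ _ _ h
  have hone : q 1 = 0 := (hq1 1).2 (one_mem _)
  have hne : q a ≠ q (σ a) := by
    intro h
    exact ha ((hqe _ _).1 h.symm)
  have ha0 : q a ≠ 0 := by
    intro h
    have := hsig σ a 1 (h.trans hone.symm)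
    rw [map_one, hone] at this
    exact hne (h.trans this.symm)
  have hb0 : q (σ a) ≠ 0 := by
    intro h
    apply ha0
    have := hinj a 1 (by rw [map_one, hone, h])
    rw [this, hone]
  have hcov := klein_cover _ _ ha0 hb0 hne
  have hσσ : q (σ (σ a)) = q a + q (σ a) := by
    rcases hcov (q (σ (σ a))) with h | h | h | h
    · exfalso
      apply hb0
      have := hinj (σ a) 1 (by rw [map_one, hone, h])
      rw [this, hone]
    · exfalso
      -- an automorphism of odd order cannot swap two classes
      have hk : ∀ k : ℕ, q ((σ ^ (2 * k)) a) = q a := by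
        intro k
        induction k with
        | zero => simp
        | succ k ih =>
          rw [show 2 * (k + 1) = 2 + 2 * k by ring, pow_add, pow_two]
          exact (hsig (σ * σ) _ _ ih).trans h
      obtain ⟨k, rfl⟩ := hp
      have h1 := hsig σ _ _ (hk k)
      rw [← MulAut.mul_apply, ← pow_succ', hσ] at h1
      exact hne h1
    · exact absurd (hinj _ _ h).symm hne
    · exact h
  refine ⟨⟨(a * σ a)⁻¹ * σ (σ a), ?_, by group⟩, fun x => ?_, fun x => ?_⟩
  · rw [← hqe, hq, hσσ]
  · rcases hcov (q x) with h | h | h | h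
    · exact ⟨x, (hq1 x).1 h, Or.inl rfl⟩
    · exact ⟨a⁻¹ * x, (hqe _ _).1 h, Or.inr (Or.inl (by group))⟩
    · exact ⟨(σ a)⁻¹ * x, (hqe _ _).1 h, Or.inr (Or.inr (Or.inl (by group)))⟩
    · exact ⟨(a * σ a)⁻¹ * x, (hqe _ _).1 (by rw [h, hq]), Or.inr (Or.inr (Or.inr (by group)))⟩
  · rw [← hq1, hq, klein_sq]

/-! ### Passage to quotients -/

theorem map_mk_commutator {G : Type*} [Group G] (K : Subgroup G) [K.Normal] :
    (commutator G).map (QuotientGroup.mk' K) = commutator (G ⧸ K) := by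
  rw [commutator_def, Subgroup.map_commutator, ← MonoidHom.range_eq_map,
    MonoidHom.range_eq_top.2 (QuotientGroup.mk'_surjective K), commutator_def]

theorem map_mk_le_center {G : Type*} [Group G] (H K : Subgroup G) [K.Normal]
    (h : ⁅H, (⊤ : Subgroup G)⁆ ≤ K) :
    H.map (QuotientGroup.mk' K) ≤ Subgroup.center (G ⧸ K) := by
  rintro _ ⟨x, hx, rfl⟩
  rw [Subgroup.mem_center_iff]
  intro y
  obtain ⟨y, rfl⟩ := QuotientGroup.mk'_surjective K y
  refine (commutatorElement_eq_one_iff_mul_comm.1 ?_).symm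
  rw [← map_commutatorElement]
  exact (QuotientGroup.eq_one_iff _).2
    (h (Subgroup.commutator_mem_commutator hx (Subgroup.mem_top y)))

theorem le_of_map_mk_le_center {G : Type*} [Group G] (H K : Subgroup G) [K.Normal]
    (h : H.map (QuotientGroup.mk' K) ≤ Subgroup.center (G ⧸ K)) :
    ⁅H, (⊤ : Subgroup G)⁆ ≤ K := by
  rw [Subgroup.commutator_le]
  intro x hx y _
  rw [← QuotientGroup.eq_one_iff]
  change QuotientGroup.mk' K ⁅x, y⁆ = 1
  rw [map_commutatorElement, commutatorElement_eq_one_iff_mul_comm]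
  exact (Subgroup.mem_center_iff.1 (h (Subgroup.mem_map_of_mem _ hx)) _).symm

/-! ### The theorem -/

/-- A finite nonabelian 2-group `N` with `N/N' ≅ C₂ × C₂` whose automorphism group is not
a 2-group is isomorphic to the quaternion group `Q₈`. -/
theorem stmt_8 (N : Type) [Group N] [Finite N] (h2 : IsPGroup 2 N)
    (hna : ∃ a b : N, a * b ≠ b * a)
    (hab : Nonempty (Abelianization N ≃* Multiplicative (ZMod 2 × ZMod 2)))
    (haut : ¬ IsPGroup 2 (MulAut N)) :
    Nonempty (N ≃* QuaternionGroup 2) := by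
  have hnil := h2.isNilpotent
  have : Finite (MulAut N) := Finite.of_injective (fun σ : MulAut N => (σ : N → N))
    DFunLike.coe_injective
  obtain ⟨p, hpm, hp2⟩ := Finset.not_subset.1
    (mt (isPGroup_iff_primeFactors_card_subset two_ne_zero).2 haut)
  have hp := Nat.prime_of_mem_primeFactors hpm
  have hp2 : p ≠ 2 := by rintro rfl; simp [Nat.prime_two] at hp2
  have := Fact.mk hp
  obtain ⟨σ, hσ⟩ := exists_prime_orderOf_dvd_card' p (Nat.dvd_of_mem_primeFactors hpm)
  obtain ⟨a, ha⟩ := exists_moved h2 hp2 hσ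
  obtain ⟨⟨t, ht, hσb⟩, hcov, hsq⟩ := exists_frame hab (hp.odd_of_ne_two hp2)
    (hσ ▸ pow_orderOf_eq_one σ) ha
  generalize hσa : σ a = b at *
  have hγ : ⁅commutator N, (⊤ : Subgroup N)⁆ = ⊥ := by
    apply eq_bot_of_le_commutator
    set K := ⁅commutator N, (⊤ : Subgroup N)⁆ with hK
    have hKc : K.Characteristic := by rw [hK, commutator_def]; infer_instance
    set L := ⁅K, (⊤ : Subgroup N)⁆ with hL
    -- the relations of `Q₈` hold in `N ⧸ K`
    have hrel : ⁅a, b⁆⁻¹ * (a * a) ∈ K ∧ ⁅a, b⁆⁻¹ * (b * b) ∈ K ∧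
        ∀ x ∈ commutator N, x ∈ K ∨ ⁅a, b⁆⁻¹ * x ∈ K := by
      let π := QuotientGroup.mk' K
      have hKσ : K ≤ K.comap (σ : N ≃* N).toMonoidHom :=
        (hKc.fixed σ).ge
      have hπT : ∀ x ∈ commutator N, π x ∈ commutator (N ⧸ K) := fun x hx =>
        map_mk_commutator K ▸ Subgroup.mem_map_of_mem _ hx
      have key := class_two_relations (QuotientGroup.map K K (σ : N ≃* N).toMonoidHom hKσ)
        (a := π a) (b := π b) (t := π t) (congrArg π hσa) (hπT t ht)
        ((congrArg π hσb).trans (by simp only [map_mul]))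
        (map_mk_commutator K ▸ map_mk_le_center _ K le_rfl)
        (fun x => by
          obtain ⟨x, rfl⟩ := QuotientGroup.mk'_surjective K x
          obtain ⟨s, hs, h⟩ := hcov x
          refine ⟨π s, hπT s hs, ?_⟩
          simp only [← map_mul]
          rcases h with h | h | h | h <;> simp [h, π])
        (fun x => by
          obtain ⟨x, rfl⟩ := QuotientGroup.mk'_surjective K x
          rw [← map_mul]
          exact hπT _ (hsq x))
      have heq : ∀ x y, π x = π y → y⁻¹ * x ∈ K := fun x y h => by
        rw [← QuotientGroup.eq_one_iff]
        change π (y⁻¹ * x) = 1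
        rw [map_mul, h, map_inv, inv_mul_cancel]
      rw [← map_commutatorElement] at key
      obtain ⟨k1, k2, -, k3⟩ := key
      refine ⟨heq _ _ ((map_mul _ _ _).trans k1), heq _ _ ((map_mul _ _ _).trans k2),
        fun x hx => ?_⟩
      rcases k3 _ (hπT x hx) with h | h
      · exact Or.inl ((QuotientGroup.eq_one_iff x).1 h)
      · exact Or.inr (heq _ _ h)
    obtain ⟨k1, k2, k3⟩ := hrel
    apply le_of_map_mk_le_center
    let π := QuotientGroup.mk' L
    have hsplit : ∀ x y : N, π x = π y * π (y⁻¹ * x) := fun x y => by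
      rw [← map_mul, mul_inv_cancel_left]
    refine commutator_le_center_of_gen (Z := K.map π) (a := π a) (b := π b)
      (map_mk_le_center K L le_rfl) (fun x => ?_) (π ⁅a, b⁆)
      ⟨_, Subgroup.mem_map_of_mem π k1, ?_⟩ ⟨_, Subgroup.mem_map_of_mem π k2, ?_⟩ ?_
    · obtain ⟨x, rfl⟩ := QuotientGroup.mk'_surjective L x
      obtain ⟨s, hs, h⟩ := hcov x
      refine ⟨π s, Subgroup.mem_map_of_mem π hs, ?_⟩
      simp only [← map_mul]
      rcases h with h | h | h | h <;> simp [h, π]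
    · rw [← map_mul]; exact hsplit _ _
    · rw [← map_mul]; exact hsplit _ _
    · rintro _ ⟨x, hx, rfl⟩
      rcases k3 x hx with h | h
      · exact ⟨_, Subgroup.mem_map_of_mem π h, Or.inl rfl⟩
      · exact ⟨_, Subgroup.mem_map_of_mem π h, Or.inr (hsplit _ _)⟩
  have hcen : commutator N ≤ Subgroup.center N := by
    intro x hx
    rw [Subgroup.mem_center_iff]
    intro y
    have : ⁅x, y⁆ ∈ (⊥ : Subgroup N) := hγ ▸ Subgroup.commutator_mem_commutator hx (Subgroup.mem_top y)
    exact (commutatorElement_eq_one_iff_mul_comm.1 (Subgroup.mem_bot.1 this)).symm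
  obtain ⟨r1, r2, r4, r3⟩ :=
    class_two_relations (σ : N ≃* N).toMonoidHom hσa ht hσb hcen hcov hsq
  have hswap : a * b = ⁅a, b⁆ * (b * a) := by simp [commutatorElement_def, mul_assoc]
  have hcm : ⁅a, b⁆ ∈ commutator N :=
    Subgroup.commutator_mem_commutator (Subgroup.mem_top a) (Subgroup.mem_top b)
  have hc1 : (1 : N) ≠ ⁅a, b⁆ := by
    intro h
    obtain ⟨x, y, hxy⟩ := hna
    apply hxy
    rw [← commutatorElement_eq_one_iff_mul_comm]
    rcases r3 _ (Subgroup.commutator_mem_commutator (Subgroup.mem_top x) (Subgroup.mem_top y))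
      with h' | h'
    · exact h'
    · exact h'.trans h.symm
  have hcard : Nat.card N = 8 := by
    have hA : Nat.card (N ⧸ commutator N) = 4 := by
      obtain ⟨e⟩ := hab
      have := Nat.card_congr e.toEquiv
      rw [Nat.card_congr Multiplicative.toAdd, Nat.card_prod, Nat.card_zmod] at this
      exact this
    have hC : Nat.card (commutator N) = 2 := by
      have : (commutator N : Set N) = {1, ⁅a, b⁆} := by
        ext x
        refine ⟨fun hx => r3 x hx, ?_⟩
        rintro (rfl | rfl)
        · exact one_mem _
        · exact hcm
      rw [← SetLike.coe_sort_coe, Nat.card_coe_set_eq, this, Set.ncard_pair hc1]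
    rw [Subgroup.card_eq_card_quotient_mul_card_subgroup (commutator N), hA, hC]
  have hinv : a * b = b * a⁻¹ := by
    rw [← r1, mul_assoc] at hswap
    rw [eq_mul_inv_iff_mul_eq, mul_assoc]
    exact (mul_left_cancel hswap).symm
  refine nonempty_equiv_of_relations hcard (x := a) (y := b) ?_ (r2.trans r1.symm) hinv ?_
  · rw [show 4 = 2 + 2 from rfl, pow_add, pow_two, r1, r4]
  · intro g
    obtain ⟨s, hs, h⟩ := hcov g
    have hs' : ∃ k : ℤ, s = a ^ k := by
      rcases r3 s hs with rfl | rfl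
      · exact ⟨0, by simp⟩
      · exact ⟨2, by rw [zpow_two, r1]⟩
    obtain ⟨k, rfl⟩ := hs'
    rcases h with rfl | rfl | rfl | rfl
    · exact ⟨k, Or.inl rfl⟩
    · exact ⟨1 + k, Or.inl (by rw [zpow_add, zpow_one])⟩
    · exact ⟨k, Or.inr rfl⟩
    · exact ⟨-1 + k, Or.inr (by rw [hinv, zpow_add, zpow_neg_one, mul_assoc])⟩
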